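/- Let k be a field of characteristic p > 0 and let A be a finite dimensional, local, commutative k-algebra with maximal ideal m satisfying a^p = 0 for all a ∈ m. Let Δ, Δ' : A → A ⊗_k A be two k-algebra homomorphisms with the property that, for every a ∈ m, both Δ(a) − a⊗1 − 1⊗a and Δ'(a) − a⊗1 − 1⊗a lie in the image of m ⊗_k m in A ⊗_k A. Let M, M' be A-modules and let M ⊠ M' denote the k-vector space M ⊗_k M' with its natural (A ⊗_k A)-module structure. Then for any k-algebra homomorphism α : k[t]/(t^p) → A making A a free k[t]/(t^p)-module, the k[t]/(t^p)-module obtained by restricting M ⊠ M' along Δ∘α is projective if and only if the k[t]/(t^p)-module obtained by restricting M ⊠ M' along Δ'∘α is projective. -/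

import Mathlib

open Polynomial TensorProduct

/-- The truncated polynomial algebra `k[t]/(t^p)`. -/
abbrev TruncPoly (k : Type*) [Field k] (p : ℕ) :=
  Polynomial k ⧸ Ideal.span {(Polynomial.X : Polynomial k) ^ p}

/-- The external tensor product module structure: if `M` is an `A`-module and `N` is a
`B`-module (compatibly with the `k`-structures), then `M ⊗ₖ N` is an `(A ⊗ₖ B)`-module with
`(a ⊗ b) • (m ⊗ n) = (a • m) ⊗ (b • n)`. -/
noncomputable def extTensorModule (k : Type*) [Field k] {A B : Type*} [Ring A] [Ring B]
    [Algebra k A] [Algebra k B] (M N : Type*)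
    [AddCommGroup M] [Module k M] [Module A M] [IsScalarTower k A M]
    [AddCommGroup N] [Module k N] [Module B N] [IsScalarTower k B N] :
    Module (A ⊗[k] B) (M ⊗[k] N) :=
  Module.compHom (M ⊗[k] N)
    ((Module.endTensorEndAlgHom (R := k) (S := k) (A := k) (M := M) (N := N)).comp
      (Algebra.TensorProduct.map (Algebra.lsmul k k M) (Algebra.lsmul k k N))).toRingHom

section helpers

theorem aux_ex' {S M : Type*} [CommRing S] [AddCommGroup M] [Module S M] (p : ℕ) (x : S)
    (hex : ∀ m : M, x • m = 0 → ∃ n : M, m = x ^ (p - 1) • n) :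
    ∀ j : ℕ, j + 1 ≤ p → ∀ m : M, x ^ j • m = 0 → ∃ n : M, m = x • n := by
  intro j
  induction j with
  | zero => intro _ m hm; exact ⟨0, by simpa using hm⟩
  | succ j ih =>
    intro hj m hm
    obtain ⟨n, hn⟩ := hex (x ^ j • m) (by rw [smul_smul, ← pow_succ']; exact hm)
    have e : p - 1 = j + (p - 1 - j - 1 + 1) := by omega
    obtain ⟨n', hn'⟩ := ih (by omega) (m - x ^ (p - 1 - j - 1 + 1) • n) (by
      rw [smul_sub, hn, smul_smul, ← pow_add, ← e, sub_self])
    refine ⟨n' + x ^ (p - 1 - j - 1) • n, ?_⟩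
    rw [smul_add, ← hn', smul_smul, ← pow_succ', sub_add_cancel]

theorem aux_trunc {k : Type*} [Field k] {p : ℕ} (hp : 0 < p) (P : Type*) [AddCommGroup P]
    [Module (TruncPoly k p) P] :
    Module.Projective (TruncPoly k p) P ↔
      ∀ m : P, (Ideal.Quotient.mk _ X : TruncPoly k p) • m = 0 →
        ∃ n : P, m = (Ideal.Quotient.mk _ X : TruncPoly k p) ^ (p - 1) • n := by
  set t : TruncPoly k p := Ideal.Quotient.mk _ X with ht
  have htp : t ^ p = 0 := by
    rw [ht, ← map_pow, Ideal.Quotient.eq_zero_iff_mem]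
    exact Ideal.mem_span_singleton_self _
  constructor
  · intro h m hm
    obtain ⟨s, hs⟩ := (Module.projective_def (R := TruncPoly k p) (P := P)).1 h
    have key : ∀ r : TruncPoly k p, t * r = 0 → ∃ q, r = t ^ (p - 1) * q := by
      intro r hr
      obtain ⟨f, rfl⟩ := Ideal.Quotient.mk_surjective r
      rw [ht, ← map_mul, Ideal.Quotient.eq_zero_iff_mem, Ideal.mem_span_singleton] at hr
      obtain ⟨g, hg⟩ := hr
      refine ⟨Ideal.Quotient.mk _ g, ?_⟩
      rw [ht, ← map_pow, ← map_mul]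
      congr 1
      apply mul_left_cancel₀ (X_ne_zero (R := k))
      rw [hg, ← mul_assoc, ← pow_succ', Nat.sub_add_cancel hp]
    have h1 : ∀ i, t * s m i = 0 := by
      intro i
      have : t • s m = 0 := by rw [← map_smul, hm, map_zero]
      simpa using DFunLike.congr_fun this i
    choose q hq using fun i => key _ (h1 i)
    refine ⟨∑ i ∈ (s m).support, q i • i, ?_⟩
    conv_lhs => rw [← hs m]
    rw [Finsupp.linearCombination_apply, Finsupp.sum, Finset.smul_sum]
    refine Finset.sum_congr rfl fun i _ => ?_
    rw [smul_smul, ← hq]; rfl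
  · intro hex
    let _ : Module k P := Module.compHom P (algebraMap k (TruncPoly k p))
    have : IsScalarTower k (TruncPoly k p) P := ⟨fun c r m =>
      (congrArg (fun q : TruncPoly k p => q • m) (Algebra.smul_def c r)).trans (mul_smul _ _ _)⟩
    let T : P →ₗ[k] P := (Algebra.lsmul k k P t)
    obtain ⟨W, hW⟩ := Submodule.exists_isCompl (LinearMap.range T)
    let b := Module.Basis.ofVectorSpace k W
    have hdec : ∀ r : TruncPoly k p, ∃ (c : k) (q : TruncPoly k p),
        r = algebraMap k (TruncPoly k p) c + t * q := by
      intro r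
      obtain ⟨f, rfl⟩ := Ideal.Quotient.mk_surjective r
      refine ⟨f.coeff 0, Ideal.Quotient.mk _ f.divX, ?_⟩
      conv_lhs => rw [← X_mul_divX_add f]
      rw [map_add, map_mul, add_comm]
      rfl
    have hex' := aux_ex' p t hex (p - 1) (by omega)
    have hli : LinearIndependent (TruncPoly k p) (fun i => (b i : P)) := by
      rw [linearIndependent_iff']
      intro s l hl
      have : ∀ j, j ≤ p → ∀ i ∈ s, ∃ q, l i = t ^ j * q := by
        intro j
        induction j with
        | zero => intro _ i _; exact ⟨l i, by simp⟩
        | succ j ih =>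
          intro hj
          have ih' := ih (by omega)
          choose! l' hl' using ih'
          choose c q hcq using fun i => hdec (l' i)
          have h0 : t ^ (p - 1) • (∑ i ∈ s, c i • (b i : P)) = 0 := by
            have : t ^ (p - 1 - j) • ∑ i ∈ s, l i • (b i : P) = 0 := by rw [hl, smul_zero]
            rw [← this, Finset.smul_sum, Finset.smul_sum]
            refine Finset.sum_congr rfl fun i hi => ?_
            rw [hl' i hi, hcq i, smul_smul, ← mul_assoc, ← pow_add,
              show p - 1 - j + j = p - 1 by omega, mul_add, ← mul_assoc, ← pow_succ,
              Nat.sub_add_cancel hp, htp, zero_mul, add_zero, mul_smul, algebraMap_smul]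
          obtain ⟨n, hn⟩ := hex' _ h0
          have hw : (∑ i ∈ s, c i • b i : W) = 0 := by
            have h1 : ((∑ i ∈ s, c i • b i : W) : P) ∈ LinearMap.range T := by
              refine ⟨n, ?_⟩
              simp only [Submodule.coe_sum, Submodule.coe_smul]
              rw [hn]; rfl
            have := Submodule.disjoint_def.1 hW.disjoint _ h1 (Subtype.property _)
            exact Subtype.ext this
          have hc := (linearIndependent_iff'.1 b.linearIndependent) s c hw
          intro i hi
          refine ⟨q i, ?_⟩
          rw [hl' i hi, hcq i, hc i hi, map_zero, zero_add, ← mul_assoc, ← pow_succ]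
      intro i hi
      obtain ⟨q, hq⟩ := this p le_rfl i hi
      rw [hq, htp, zero_mul]
    have hsp : ⊤ ≤ Submodule.span (TruncPoly k p) (Set.range (fun i => (b i : P))) := by
      set U := Submodule.span (TruncPoly k p) (Set.range (fun i => (b i : P)))
      have hWU : ∀ w : W, (w : P) ∈ U := by
        intro w
        rw [← b.linearCombination_repr w, Finsupp.linearCombination_apply, Finsupp.sum,
          Submodule.coe_sum]
        refine Submodule.sum_mem _ fun i _ => ?_
        rw [Submodule.coe_smul, ← algebraMap_smul (TruncPoly k p)]
        exact Submodule.smul_mem _ _ (Submodule.subset_span ⟨i, rfl⟩)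
      have : ∀ j : ℕ, ∀ m : P, ∃ u ∈ U, ∃ n : P, m = u + t ^ j • n := by
        intro j
        induction j with
        | zero => intro m; exact ⟨0, zero_mem _, m, by simp⟩
        | succ j ih =>
          intro m
          obtain ⟨u, hu, n, hn⟩ := ih m
          have : n ∈ LinearMap.range T ⊔ W := by rw [hW.sup_eq_top]; trivial
          obtain ⟨_, ⟨n', rfl⟩, w, hw, e⟩ := Submodule.mem_sup.1 this
          refine ⟨u + t ^ j • w, add_mem hu (Submodule.smul_mem _ _ (hWU ⟨w, hw⟩)), n', ?_⟩
          have e' : t • n' + w = n := e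
          rw [hn, ← e', smul_add, smul_smul, ← pow_succ]
          abel
      intro m _
      obtain ⟨u, hu, n, hn⟩ := this p m
      have h0 : t ^ p • n = 0 := by rw [htp]; exact zero_smul (TruncPoly k p) n
      rw [hn, h0, add_zero]; exact hu
    exact Module.Projective.of_basis (Module.Basis.mk hli hsp)

theorem aux_polymod {S M : Type*} [CommRing S] [AddCommGroup M] [Module S M]
    (f : PolynomialModule S M) (hf : f.coeff 0 = 0) :
    ∃ g : PolynomialModule S M, f = (X : S[X]) • g := by
  refine ⟨.ofCoeff S (f.coeff.comapDomain Nat.succ (Nat.succ_injective.injOn)), ?_⟩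
  ext n
  rw [X, PolynomialModule.monomial_smul_apply]
  cases n with
  | zero => simpa using hf
  | succ n => simp

theorem aux_X_inj {S M : Type*} [CommRing S] [AddCommGroup M] [Module S M]
    (f : PolynomialModule S M) (hf : (X : S[X]) • f = 0) : f = 0 := by
  ext n
  have := congrArg (fun g => g.coeff (n + 1)) hf
  rw [X, PolynomialModule.monomial_smul_apply] at this
  simpa using this

theorem aux_coeff0 {S M : Type*} [CommRing S] [AddCommGroup M] [Module S M]
    (q : S[X]) (f : PolynomialModule S M) : (q • f).coeff 0 = q.coeff 0 • f.coeff 0 := by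
  rw [PolynomialModule.smul_apply]; simp

theorem aux_step {S M : Type*} [CommRing S] [AddCommGroup M] [Module S M] (p : ℕ)
    [Fact p.Prime] [CharP S p] (x y z : S) (hx : x ^ p = 0) (hy : y ^ p = 0) (hz : z ^ p = 0)
    (hex : ∀ m : M, x • m = 0 → ∃ n : M, m = x ^ (p - 1) • n) :
    ∀ m : M, (x + y * z) • m = 0 → ∃ n : M, m = (x + y * z) ^ (p - 1) • n := by
  have hp : 0 < p := (Fact.out : p.Prime).pos
  let D : S[X] := C x + X * C z
  have hD0 : D.coeff 0 = x := by simp [D]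
  have hDp0 : (D ^ (p - 1)).coeff 0 = x ^ (p - 1) := by
    rw [coeff_zero_eq_eval_zero, eval_pow, ← coeff_zero_eq_eval_zero, hD0]
  have hDp : D * D ^ (p - 1) = 0 := by
    rw [← pow_succ', Nat.sub_add_cancel hp]
    simp only [D]
    rw [add_pow_char, mul_pow, ← C_pow, ← C_pow, hx, hz]; simp
  have hex' := aux_ex' p x hex (p - 1) (by omega)
  have hcancel : ∀ f g : PolynomialModule S M, (X : S[X]) • f = (X : S[X]) • g → f = g := by
    intro f g h
    exact sub_eq_zero.1 (aux_X_inj _ (by rw [smul_sub, h, sub_self]))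
  have hA : ∀ n : ℕ, ∀ g : PolynomialModule S M, D ^ (p - 1) • g = 0 → ∃ a b : PolynomialModule S M, g = D • a + (X : S[X]) ^ n • b := by
    intro n
    induction n with
    | zero => intro g _; exact ⟨0, g, by simp⟩
    | succ n ih =>
      intro g hg
      obtain ⟨a0, ha0⟩ := hex' (g.coeff 0) (by rw [← hDp0, ← aux_coeff0, hg]; rfl)
      obtain ⟨g1, hg1⟩ := aux_polymod (g - D • (PolynomialModule.single S 0 a0 : PolynomialModule S M)) (by
        have : (D • (PolynomialModule.single S 0 a0 : PolynomialModule S M)).coeff 0 = x • a0 := by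
          rw [aux_coeff0, hD0]; congr 1; exact Finsupp.single_eq_same
        show g.coeff 0 - (D • (PolynomialModule.single S 0 a0 : PolynomialModule S M)).coeff 0 = 0
        rw [this, ha0, sub_self])
      obtain ⟨a, b, hab⟩ := ih g1 (by
        apply aux_X_inj
        rw [smul_comm, ← hg1, smul_sub, hg, smul_smul, mul_comm, hDp, zero_smul, sub_zero])
      refine ⟨PolynomialModule.single S 0 a0 + (X : S[X]) • a, b, ?_⟩
      rw [sub_eq_iff_eq_add.1 hg1, hab]
      simp only [smul_add, smul_smul]
      rw [pow_succ', mul_comm D X]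
      abel
  have hB : ∀ n : ℕ, ∀ F c : PolynomialModule S M, D • F = (X : S[X]) ^ n • c →
      ∃ a b : PolynomialModule S M, F = D ^ (p - 1) • a + (X : S[X]) ^ n • b := by
    intro n
    induction n with
    | zero => intro g _ _; exact ⟨0, g, by simp⟩
    | succ n ih =>
      intro g c hg
      obtain ⟨a0, ha0⟩ := hex (g.coeff 0) (by
        rw [← hD0, ← aux_coeff0, hg, aux_coeff0]; simp)
      obtain ⟨g1, hg1⟩ := aux_polymod (g - D ^ (p - 1) • (PolynomialModule.single S 0 a0 : PolynomialModule S M)) (by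
        have : (D ^ (p - 1) • (PolynomialModule.single S 0 a0 : PolynomialModule S M)).coeff 0 = x ^ (p - 1) • a0 := by
          rw [aux_coeff0, hDp0]; congr 1; exact Finsupp.single_eq_same
        show g.coeff 0 - (D ^ (p - 1) • (PolynomialModule.single S 0 a0 : PolynomialModule S M)).coeff 0 = 0
        rw [this, ha0, sub_self])
      obtain ⟨a, b, hab⟩ := ih g1 c (by
        apply hcancel
        rw [smul_comm, ← hg1, smul_sub, hg, smul_smul, hDp, zero_smul, sub_zero, smul_smul,
          pow_succ'])
      refine ⟨PolynomialModule.single S 0 a0 + (X : S[X]) • a, b, ?_⟩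
      rw [sub_eq_iff_eq_add.1 hg1, hab]
      simp only [smul_add, smul_smul]
      rw [pow_succ', mul_comm (D ^ (p - 1)) X]
      abel
  have hXpow : ∀ n : ℕ, ∀ f : PolynomialModule S M, (X : S[X]) ^ n • f = 0 → f = 0 := by
    intro n
    induction n with
    | zero => intro f hf; simpa using hf
    | succ n ih =>
      intro f hf
      apply ih
      apply aux_X_inj
      rw [smul_smul, ← pow_succ']; exact hf
  intro m hm
  let e : S[X] := X - C y
  have he : ∀ f : PolynomialModule S M, e • f = 0 → f = 0 := by
    intro f hf
    apply hXpow p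
    have h1 : (X : S[X]) ^ p = e ^ (p - 1) * e := by
      rw [← pow_succ, Nat.sub_add_cancel hp]
      simp only [e]
      rw [sub_pow_char, ← C_pow, hy]; simp
    rw [h1, mul_smul, hf, smul_zero]
  let m' : PolynomialModule S M := PolynomialModule.single S 0 m
  have hC : ∀ s : S, (C s : S[X]) • m' = PolynomialModule.single S 0 (s • m) := by
    intro s
    rw [← monomial_zero_left, PolynomialModule.monomial_smul_single]
  have hDm : D • m' = e • (C z : S[X]) • m' := by
    have h2 : D = C (x + y * z) + e * C z := by
      simp only [D, e, map_add, map_mul]; ring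
    rw [h2, add_smul, hC (x + y * z), hm, mul_smul]; simp
  obtain ⟨a, b, hab⟩ := hA p ((C z : S[X]) • m') (by
    apply he
    rw [smul_comm, ← hDm, smul_smul, mul_comm, hDp, zero_smul])
  obtain ⟨a2, b2, hab2⟩ := hB p (m' - e • a) (e • b) (by
    rw [smul_sub, hDm, hab, smul_add, smul_comm D e a, smul_comm e (X ^ p : S[X]) b]
    abel)
  refine ⟨PolynomialModule.eval y a2, ?_⟩
  have := congrArg (PolynomialModule.eval y) hab2
  simp only [map_sub, map_add, PolynomialModule.eval_smul] at this
  simpa [m', e, D, hy, mul_comm z y] using this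

theorem aux_iff {S M : Type*} [CommRing S] [AddCommGroup M] [Module S M] (p : ℕ)
    [Fact p.Prime] [CharP S p] (x y z : S) (hx : x ^ p = 0) (hy : y ^ p = 0) (hz : z ^ p = 0) :
    (∀ m : M, x • m = 0 → ∃ n : M, m = x ^ (p - 1) • n) ↔
    ∀ m : M, (x + y * z) • m = 0 → ∃ n : M, m = (x + y * z) ^ (p - 1) • n := by
  refine ⟨aux_step p x y z hx hy hz, fun h => ?_⟩
  have hp : p ≠ 0 := (Fact.out : p.Prime).ne_zero
  have := aux_step p (x + y * z) (-y) z (by rw [add_pow_char, mul_pow, hx, hy]; simp)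
    (by rw [neg_pow, hy, mul_zero]) hz h
  simpa using this

theorem aux_restrict {k : Type*} [Field k] {p : ℕ} (hp : 0 < p) {S : Type*} [CommRing S]
    [Algebra k S] (P : Type*) [AddCommGroup P] [Module S P] (φ : TruncPoly k p →ₐ[k] S) :
    (letI := Module.compHom P φ.toRingHom
     Module.Projective (TruncPoly k p) P) ↔
    ∀ m : P, φ (Ideal.Quotient.mk _ X) • m = 0 →
      ∃ n : P, m = φ (Ideal.Quotient.mk _ X) ^ (p - 1) • n := by
  rw [← map_pow]
  letI := Module.compHom P φ.toRingHom
  exact aux_trunc hp P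

theorem aux_span {k S M : Type*} [Field k] [CommRing S] [Algebra k S] [AddCommGroup M]
    [Module S M] (p : ℕ) [Fact p.Prime] [CharP S p] (G : Set S)
    (hG : ∀ g ∈ G, ∃ y z : S, g = y * z ∧ y ^ p = 0 ∧ z ^ p = 0) (s : S)
    (hs : s ∈ Submodule.span k G) :
    s ^ p = 0 ∧ ∀ (c : k) (x : S), x ^ p = 0 →
      ((∀ m : M, x • m = 0 → ∃ n : M, m = x ^ (p - 1) • n) ↔
      ∀ m : M, (x + c • s) • m = 0 → ∃ n : M, m = (x + c • s) ^ (p - 1) • n) := by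
  have hp : p ≠ 0 := (Fact.out : p.Prime).ne_zero
  induction hs using Submodule.span_induction with
  | mem g hg =>
    obtain ⟨y, z, rfl, hy, hz⟩ := hG g hg
    refine ⟨by rw [mul_pow, hy, zero_mul], fun c x hx => ?_⟩
    rw [← smul_mul_assoc]
    exact aux_iff p x (c • y) z hx (by rw [_root_.smul_pow, hy, smul_zero]) hz
  | zero => exact ⟨zero_pow hp, fun c x _ => by simp⟩
  | add a b _ _ iha ihb =>
    refine ⟨by rw [add_pow_char, iha.1, ihb.1, add_zero], fun c x hx => ?_⟩
    rw [iha.2 c x hx, ihb.2 c (x + c • a) (by rw [add_pow_char, hx, _root_.smul_pow, iha.1]; simp),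
      add_assoc, smul_add]
  | smul c' a _ iha =>
    refine ⟨by rw [_root_.smul_pow, iha.1, smul_zero], fun c x hx => ?_⟩
    rw [iha.2 (c * c') x hx, mul_smul]

end helpers


theorem statement2 (k : Type*) [Field k] (p : ℕ) [Fact p.Prime] [CharP k p]
    (A : Type*) [CommRing A] [Algebra k A] [FiniteDimensional k A] [IsLocalRing A]
    (hnil : ∀ a ∈ IsLocalRing.maximalIdeal A, a ^ p = 0)
    (Δ Δ' : A →ₐ[k] A ⊗[k] A)
    (hΔ : ∀ a ∈ IsLocalRing.maximalIdeal A,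
      Δ a - a ⊗ₜ[k] (1 : A) - (1 : A) ⊗ₜ[k] a ∈
        Submodule.span k {x : A ⊗[k] A | ∃ b ∈ IsLocalRing.maximalIdeal A,
          ∃ b' ∈ IsLocalRing.maximalIdeal A, x = b ⊗ₜ[k] b'})
    (hΔ' : ∀ a ∈ IsLocalRing.maximalIdeal A,
      Δ' a - a ⊗ₜ[k] (1 : A) - (1 : A) ⊗ₜ[k] a ∈
        Submodule.span k {x : A ⊗[k] A | ∃ b ∈ IsLocalRing.maximalIdeal A,
          ∃ b' ∈ IsLocalRing.maximalIdeal A, x = b ⊗ₜ[k] b'})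
    (M M' : Type*) [AddCommGroup M] [Module k M] [Module A M] [IsScalarTower k A M]
    [AddCommGroup M'] [Module k M'] [Module A M'] [IsScalarTower k A M']
    (α : TruncPoly k p →ₐ[k] A)
    (hα : letI := Module.compHom A α.toRingHom
          Module.Free (TruncPoly k p) A) :
    (letI := extTensorModule k (A := A) (B := A) M M'
     letI := Module.compHom (M ⊗[k] M') (Δ.comp α).toRingHom
     Module.Projective (TruncPoly k p) (M ⊗[k] M')) ↔
    (letI := extTensorModule k (A := A) (B := A) M M'
     letI := Module.compHom (M ⊗[k] M') (Δ'.comp α).toRingHom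
     Module.Projective (TruncPoly k p) (M ⊗[k] M')) := by
  have hp : 0 < p := (Fact.out : p.Prime).pos
  letI := extTensorModule k (A := A) (B := A) M M'
  haveI : CharP (A ⊗[k] A) p :=
    charP_of_injective_algebraMap (algebraMap k (A ⊗[k] A)).injective p
  set t : TruncPoly k p := Ideal.Quotient.mk _ X with ht
  have htp : t ^ p = 0 := by
    rw [ht, ← map_pow, Ideal.Quotient.eq_zero_iff_mem]
    exact Ideal.mem_span_singleton_self _
  have hαt : α t ^ p = 0 := by rw [← map_pow, htp, map_zero]
  have hαm : α t ∈ IsLocalRing.maximalIdeal A := by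
    rw [IsLocalRing.mem_maximalIdeal, mem_nonunits_iff]
    intro hu
    have := hu.pow p
    rw [hαt] at this
    exact not_isUnit_zero this
  have hs := sub_mem (hΔ' _ hαm) (hΔ _ hαm)
  have hG : ∀ g ∈ {x : A ⊗[k] A | ∃ b ∈ IsLocalRing.maximalIdeal A,
          ∃ b' ∈ IsLocalRing.maximalIdeal A, x = b ⊗ₜ[k] b'},
      ∃ y z : A ⊗[k] A, g = y * z ∧ y ^ p = 0 ∧ z ^ p = 0 := by
    rintro _ ⟨b, hb, b', hb', rfl⟩
    refine ⟨b ⊗ₜ 1, 1 ⊗ₜ b', by simp, ?_, ?_⟩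
    · rw [Algebra.TensorProduct.tmul_pow, hnil b hb, zero_tmul]
    · rw [Algebra.TensorProduct.tmul_pow, hnil b' hb', tmul_zero]
  have key := (aux_span (M := M ⊗[k] M') p _ hG _ hs).2 1 (Δ (α t))
    (by rw [← map_pow, hαt, map_zero])
  rw [one_smul, show Δ (α t) + (Δ' (α t) - α t ⊗ₜ[k] (1 : A) - (1 : A) ⊗ₜ[k] α t -
    (Δ (α t) - α t ⊗ₜ[k] (1 : A) - (1 : A) ⊗ₜ[k] α t)) = Δ' (α t) by abel] at key
  exact (aux_restrict hp (M ⊗[k] M') (Δ.comp α)).trans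
    (key.trans (aux_restrict hp (M ⊗[k] M') (Δ'.comp α)).symm)
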